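/- Assume (P1) and (P6), that ‖Φ(k,n)‖ ≤ K θ^{k−n} for all k ≥ n ≥ 0 with constants K > 0 and θ ∈ (0,1), and that f satisfies |f(k,y) − f(k,ỹ)| ≤ γ|y − ỹ| and |f(k,y)| ≤ μ with constants γ, μ ≥ 0 such that μK/(1−θ) < ∞ and γK/(1−θ) < q < 1. Then: (i) if (N) has an equilibrium y*, it is unique; (ii) if f(n,0) = 0 for all n, then H(k,0) = G(k,0) = 0 for all k; (iii) if y* ≠ 0 is an equilibrium, then lim_{k→∞} H(k,0) = y* and lim_{k→∞} G(k,y*) = 0, where G(k,ξ) = Φ(k,0)·y(0,k,ξ) and H(k,ξ) = y(k,0,Φ(0,k)ξ). -/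

import Mathlib

/-!
Two solutions `u`, `v` of the perturbed system approach each other exponentially:
`‖u k - v k‖ ≤ K * (θ + K * γ) ^ k * ‖u 0 - v 0‖`, and `θ + K * γ < 1` by the smallness of `γ`
(`norm_fwd_sub_le`, a Gronwall-type estimate). An equilibrium is a constant solution, so this yields
both its uniqueness and `H(k,0) → y*`. For the statements on `G`, condition (P6) makes the
perturbed system backward unique (`eq_of_eq_later`), so a solution passing through an
equilibrium at time `k` already sits there at time `0`; then `G(k,y*) = Φ(k,0) y*`, which tends to
`0` by the exponential bound on `Φ`.
-/

open Finset Filter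

noncomputable section

/-- `ℝ^d` with the Euclidean norm. -/
abbrev E (d : ℕ) := EuclideanSpace ℝ (Fin d)

/-- `fwd d A n j = Φ(n+j, n) = A(n+j-1)⋯A(n)` as a continuous linear equivalence. -/
noncomputable def fwd (d : ℕ) (A : ℕ → (E d ≃L[ℝ] E d)) (n : ℕ) : ℕ → (E d ≃L[ℝ] E d)
  | 0 => ContinuousLinearEquiv.refl ℝ (E d)
  | (j+1) => (fwd d A n j).trans (A (n + j))

/-- The transition matrix `Φ(k,n)`: `A(k−1)⋯A(n)` for `k > n`, the identity for `k = n`,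
and `A(k)⁻¹A(k+1)⁻¹⋯A(n−1)⁻¹` for `k < n`. -/
noncomputable def Phi (d : ℕ) (A : ℕ → (E d ≃L[ℝ] E d)) (k n : ℕ) : E d ≃L[ℝ] E d :=
  if n ≤ k then fwd d A n (k - n) else (fwd d A k (n - k)).symm

/-- The Green function `𝒢(k,n) = Φ(k,n)P(n)` for `k ≥ n` and `−Φ(k,n)Q(n)` for `k < n`. -/
noncomputable def Green (d : ℕ) (A : ℕ → (E d ≃L[ℝ] E d)) (P Q : ℕ → (E d →L[ℝ] E d))
    (k n : ℕ) : E d →L[ℝ] E d :=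
  if n ≤ k then ((Phi d A k n : E d →L[ℝ] E d).comp (P n))
  else -((Phi d A k n : E d →L[ℝ] E d).comp (Q n))

lemma fwd_succ_apply (d : ℕ) (A : ℕ → (E d ≃L[ℝ] E d)) (n j : ℕ) (x : E d) :
    fwd d A n (j + 1) x = fwd d A (n + 1) j (A n x) := by
  induction j with
  | zero => simp [fwd]
  | succ j ih =>
    have h : fwd d A n (j + 1 + 1) x = A (n + (j + 1)) (fwd d A n (j + 1) x) := rfl
    have h' : fwd d A (n + 1) (j + 1) (A n x) = A (n + 1 + j) (fwd d A (n + 1) j (A n x)) := rfl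
    rw [h, h', ih, show n + (j + 1) = n + 1 + j by omega]

lemma Phi_add (d : ℕ) (A : ℕ → (E d ≃L[ℝ] E d)) (n j : ℕ) :
    Phi d A (n + j) n = fwd d A n j := by
  simp [Phi]

/-- Gronwall-type estimate for the difference of two solutions, propagated by the linear flow for
`j` further steps. Carrying `j` along closes the induction on `k` without the variation of
constants formula; the case `j = 0` is the contraction estimate itself. -/
lemma norm_fwd_sub_le {d : ℕ} {A : ℕ → (E d ≃L[ℝ] E d)} {f : ℕ → E d → E d} {K θ γ : ℝ}
    (hK : 0 < K) (hθ : 0 < θ) (hγ : 0 ≤ γ)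
    (hfwd : ∀ n j x, ‖fwd d A n j x‖ ≤ K * θ ^ j * ‖x‖)
    (hLip : ∀ k y z, ‖f k y - f k z‖ ≤ γ * ‖y - z‖)
    {u v : ℕ → E d} (hu : ∀ n, u (n + 1) = A n (u n) + f n (u n))
    (hv : ∀ n, v (n + 1) = A n (v n) + f n (v n)) (k j : ℕ) :
    ‖fwd d A k j (u k - v k)‖ ≤ θ ^ j * (K * (θ + K * γ) ^ k * ‖u 0 - v 0‖) := by
  induction k generalizing j with
  | zero => exact (hfwd 0 j _).trans_eq (by ring)
  | succ k ih =>
    set S := K * (θ + K * γ) ^ k * ‖u 0 - v 0‖ with hS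
    have hw : ‖u k - v k‖ ≤ S := by simpa [fwd] using ih 0
    have hstep : u (k + 1) - v (k + 1) = A k (u k - v k) + (f k (u k) - f k (v k)) := by
      rw [hu, hv, map_sub]; abel
    have hpert : ‖fwd d A (k + 1) j (f k (u k) - f k (v k))‖ ≤ K * θ ^ j * (γ * S) := by
      refine (hfwd _ _ _).trans ?_
      gcongr
      exact (hLip _ _ _).trans (by gcongr)
    calc ‖fwd d A (k + 1) j (u (k + 1) - v (k + 1))‖
        = ‖fwd d A k (j + 1) (u k - v k) + fwd d A (k + 1) j (f k (u k) - f k (v k))‖ := by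
          rw [hstep, map_add, fwd_succ_apply]
      _ ≤ θ ^ (j + 1) * S + K * θ ^ j * (γ * S) :=
          (norm_add_le _ _).trans (add_le_add (ih (j + 1)) hpert)
      _ = θ ^ j * (K * (θ + K * γ) ^ (k + 1) * ‖u 0 - v 0‖) := by rw [hS]; ring

/-- Backward uniqueness: two solutions that agree at time `m` agree at time `0`, since each step
`y ↦ A n y + f n y` is injective under (P6). -/
lemma eq_of_eq_later {d : ℕ} {A : ℕ → (E d ≃L[ℝ] E d)} {f : ℕ → E d → E d} {γ : ℝ}
    (hLip : ∀ k y z, ‖f k y - f k z‖ ≤ γ * ‖y - z‖)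
    (hP6 : ∀ ℓ, ‖((A ℓ).symm : E d →L[ℝ] E d)‖ * γ < 1)
    {u v : ℕ → E d} (hu : ∀ n, u (n + 1) = A n (u n) + f n (u n))
    (hv : ∀ n, v (n + 1) = A n (v n) + f n (v n)) (m : ℕ) (h : u m = v m) : u 0 = v 0 := by
  induction m with
  | zero => exact h
  | succ n ih =>
    apply ih
    rw [hu, hv] at h
    have h1 : A n (u n - v n) = f n (v n) - f n (u n) := by
      rw [map_sub, sub_eq_sub_iff_add_eq_add, h]; abel
    have h2 : u n - v n = ((A n).symm : E d →L[ℝ] E d) (f n (v n) - f n (u n)) := by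
      rw [← h1]; simp
    have h3 : ‖u n - v n‖ ≤ ‖((A n).symm : E d →L[ℝ] E d)‖ * γ * ‖u n - v n‖ := by
      calc ‖u n - v n‖ = ‖((A n).symm : E d →L[ℝ] E d) (f n (v n) - f n (u n))‖ := by rw [← h2]
        _ ≤ ‖((A n).symm : E d →L[ℝ] E d)‖ * ‖f n (v n) - f n (u n)‖ :=
            ContinuousLinearMap.le_opNorm _ _
        _ ≤ ‖((A n).symm : E d →L[ℝ] E d)‖ * (γ * ‖u n - v n‖) := by
            rw [norm_sub_rev (u n)]
            gcongr
            exact hLip _ _ _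
        _ = _ := by ring
    rw [← sub_eq_zero, ← norm_eq_zero]
    nlinarith [norm_nonneg (u n - v n), hP6 n]

/-- uniform exponential contraction case: uniqueness of the equilibrium, H(k,0) = G(k,0) = 0 when f(n,0) = 0, and the limits H(k,0) → y*, G(k,y*) → 0 when y* ≠ 0, where G(k,ξ) = Φ(k,0)y(0,k,ξ) and H(k,ξ) = y(k,0,Φ(0,k)ξ). -/
theorem stmt_8 (d : ℕ) (hd : 1 ≤ d) (A : ℕ → (E d ≃L[ℝ] E d))
    (f : ℕ → E d → E d)
    (M : ℝ) (hM : 1 ≤ M)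
    (hA : ∀ k, ‖(A k : E d →L[ℝ] E d)‖ ≤ M)
    (hAinv : ∀ k, ‖((A k).symm : E d →L[ℝ] E d)‖ ≤ M)
    (K θ γ μ q : ℝ) (hK : 0 < K) (hθ1 : 0 < θ) (hθ2 : θ < 1)
    (hPhi : ∀ k n, n ≤ k → ‖(Phi d A k n : E d →L[ℝ] E d)‖ ≤ K * θ ^ (k - n))
    (hγ : 0 ≤ γ) (hμ : 0 ≤ μ)
    (hLip : ∀ k y ytilde, ‖f k y - f k ytilde‖ ≤ γ * ‖y - ytilde‖)
    (hfbd : ∀ k y, ‖f k y‖ ≤ μ)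
    (hqlow : γ * K / (1 - θ) < q) (hq : q < 1)
    (hP6 : ∀ ℓ, ‖((A ℓ).symm : E d →L[ℝ] E d)‖ * γ < 1)
    (Y : ℕ → E d → ℕ → E d)
    (hY : ∀ m η, (∀ n, Y m η (n+1) = A n (Y m η n) + f n (Y m η n)) ∧ Y m η m = η)
    :
    ((∀ ystar ybar : E d, (∀ n, ystar = A n ystar + f n ystar) →
        (∀ n, ybar = A n ybar + f n ybar) → ystar = ybar) ∧
      ((∀ n, f n 0 = 0) →
        ∀ k, Y 0 (Phi d A 0 k (0 : E d)) k = 0 ∧ Phi d A k 0 (Y k (0 : E d) 0) = 0) ∧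
      (∀ ystar : E d, ystar ≠ 0 → (∀ n, ystar = A n ystar + f n ystar) →
        Tendsto (fun k => Y 0 (Phi d A 0 k (0 : E d)) k) atTop (nhds ystar) ∧
        Tendsto (fun k => Phi d A k 0 (Y k ystar 0)) atTop (nhds (0 : E d)))) := by
  have hfwd : ∀ n j x, ‖fwd d A n j x‖ ≤ K * θ ^ j * ‖x‖ := by
    intro n j x
    have h := hPhi (n + j) n (Nat.le_add_right n j)
    rw [Phi_add, Nat.add_sub_cancel_left] at h
    exact ContinuousLinearMap.le_of_opNorm_le _ h x
  have hρ : θ + K * γ < 1 := by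
    have h := (div_lt_iff₀ (by linarith : 0 < 1 - θ)).1 (hqlow.trans hq)
    linarith
  have hρ0 : 0 ≤ θ + K * γ := by positivity
  -- Any two solutions are asymptotic to each other.
  have hlim : ∀ u v : ℕ → E d, (∀ n, u (n + 1) = A n (u n) + f n (u n)) →
      (∀ n, v (n + 1) = A n (v n) + f n (v n)) →
      Tendsto (fun k => u k - v k) atTop (nhds 0) := by
    intro u v hu hv
    refine squeeze_zero_norm (a := fun k => K * (θ + K * γ) ^ k * ‖u 0 - v 0‖) (fun k => ?_) ?_
    · simpa [fwd] using norm_fwd_sub_le hK hθ1 hγ hfwd hLip hu hv k 0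
    · simpa using ((tendsto_pow_atTop_nhds_zero_of_lt_one hρ0 hρ).const_mul K).mul_const ‖u 0 - v 0‖
  refine ⟨fun ystar ybar h1 h2 => ?_, fun hf0 k => ⟨?_, ?_⟩, fun ystar _ h => ⟨?_, ?_⟩⟩
  · have h := hlim (fun _ => ystar) (fun _ => ybar) h1 h2
    exact sub_eq_zero.1 (tendsto_nhds_unique tendsto_const_nhds h)
  · rw [map_zero]
    induction k with
    | zero => exact (hY 0 0).2
    | succ k ih => rw [(hY 0 0).1, ih, map_zero, hf0, add_zero]
  · have h0 : Y k 0 0 = 0 := eq_of_eq_later (v := fun _ => 0) hLip hP6 (hY k 0).1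
      (fun n => by simp [hf0]) k (hY k 0).2
    rw [h0, map_zero]
  · have h' := (hlim (Y 0 0) (fun _ => ystar) (hY 0 0).1 h).add_const ystar
    simpa using h'
  · have h0 : ∀ k, Y k ystar 0 = ystar := fun k =>
      eq_of_eq_later (v := fun _ => ystar) hLip hP6 (hY k ystar).1 h k (hY k ystar).2
    simp only [h0]
    refine squeeze_zero_norm (a := fun k => K * θ ^ k * ‖ystar‖) (fun k => ?_) ?_
    · simpa [Phi] using hfwd 0 k ystar
    · simpa using
        ((tendsto_pow_atTop_nhds_zero_of_lt_one hθ1.le hθ2).const_mul K).mul_const ‖ystar‖
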